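/- Let (X^H)_{H∈(0,1)} be a family of centered Gaussian processes on [0,1] such that, for a constant C₂ > 0 and all H ∈ (0,1), ‖X^H_t − X^H_s‖₂ ≤ C₂|t−s|^H for all t, s ∈ [0,1]. Let H_m ∈ (0,1) and integers n_m ≥ 2 be sequences with H_m → 0 and H_m·ln n_m → 0 as m → ∞. Then √(H_m)·E[max_{0≤i≤n_m} X^{H_m}_{i/n_m}] → 0 as m → ∞, i.e. E[max_{0≤i≤n_m} X^{H_m}_{i/n_m}] = o(H_m^{−1/2}). -/

import Mathlib

open MeasureTheory ProbabilityTheory Real Set Filter Topology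

noncomputable section

/-- `X` is a centered Gaussian process on the time set `S`: every finite linear
combination `∑ i, c i * X (ts i)` of its values at times in `S` is a centered
Gaussian random variable. -/
def IsCenteredGaussianOn {Ω : Type} [MeasurableSpace Ω] (μ : Measure Ω)
    (X : ℝ → Ω → ℝ) (S : Set ℝ) : Prop :=
  (∀ t ∈ S, Measurable (X t)) ∧
  ∀ (k : ℕ) (c : Fin k → ℝ) (ts : Fin k → ℝ), (∀ i, ts i ∈ S) →
    ∃ v : NNReal, μ.map (fun ω => ∑ i, c i * X (ts i) ω) = gaussianReal 0 v

/-- The `L²`-norm `‖Y‖₂ = (E Y²)^{1/2}` of a real random variable. -/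
def l2norm {Ω : Type} [MeasurableSpace Ω] (μ : Measure Ω) (Y : Ω → ℝ) : ℝ :=
  Real.sqrt (∫ ω, (Y ω) ^ 2 ∂μ)

/-- The expected supremum `E [sup_{0 ≤ t ≤ 1} X_t]`. -/
def expMax {Ω : Type} [MeasurableSpace Ω] (μ : Measure Ω) (X : ℝ → Ω → ℝ) : ℝ :=
  ∫ ω, (⨆ t : Icc (0:ℝ) 1, X t.1 ω) ∂μ

/-- The expected maximum over the grid: `E [max_{0 ≤ i ≤ n} X_{i/n}]`. -/
def expMaxGrid {Ω : Type} [MeasurableSpace Ω] (μ : Measure Ω) (X : ℝ → Ω → ℝ) (n : ℕ) : ℝ :=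
  ∫ ω, (⨆ i : Fin (n + 1), X (((i : ℕ) : ℝ) / (n : ℝ)) ω) ∂μ

/-- `B` is a fractional Brownian motion with Hurst parameter `H`: a centered Gaussian
process on `[0,∞)` with a.s. continuous sample paths, `B 0 = 0`, and covariance
`E[B_s B_t] = (s^{2H} + t^{2H} - |t-s|^{2H}) / 2`. -/
def IsFBM {Ω : Type} [MeasurableSpace Ω] (μ : Measure Ω) (H : ℝ) (B : ℝ → Ω → ℝ) : Prop :=
  IsCenteredGaussianOn μ B (Ici 0) ∧
  (∀ᵐ ω ∂μ, ContinuousOn (fun t => B t ω) (Ici 0)) ∧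
  (∀ᵐ ω ∂μ, B 0 ω = 0) ∧
  ∀ s t : ℝ, 0 ≤ s → 0 ≤ t →
    ∫ ω, B s ω * B t ω ∂μ = (s ^ (2 * H) + t ^ (2 * H) - |t - s| ^ (2 * H)) / 2

/-- The pointwise maximum of finitely many integrable functions is integrable. -/
lemma integrable_iSup_of_fintype {Ω ι : Type*} [MeasurableSpace Ω] [Fintype ι] [Nonempty ι]
    {μ : Measure Ω} {Z : ι → Ω → ℝ} (hZ : ∀ i, Integrable (Z i) μ) :
    Integrable (fun ω => ⨆ i, Z i ω) μ := by
  refine Integrable.mono' (integrable_finsetSum Finset.univ fun i _ => (hZ i).abs)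
    (AEMeasurable.iSup fun i => (hZ i).aemeasurable).aestronglyMeasurable (ae_of_all _ fun ω => ?_)
  obtain ⟨i, hi⟩ := exists_eq_ciSup_of_finite (f := fun i => Z i ω)
  rw [← hi, Real.norm_eq_abs]
  exact Finset.single_le_sum (f := fun i => |Z i ω|) (fun j _ => abs_nonneg _) (Finset.mem_univ i)

/-- Maximal inequality for finitely many sub-Gaussian random variables, before optimizing over the
exponent `r`. -/
lemma integral_iSup_le_of_hasSubgaussianMGF {Ω ι : Type*} [MeasurableSpace Ω] [Fintype ι]
    [Nonempty ι] {μ : Measure Ω} [IsProbabilityMeasure μ] {Z : ι → Ω → ℝ} {c : NNReal}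
    (hZ : ∀ i, HasSubgaussianMGF (Z i) c μ) {r : ℝ} (hr : 0 < r) :
    ∫ ω, (⨆ i, Z i ω) ∂μ ≤ (log (Fintype.card ι) + c * r ^ 2 / 2) / r := by
  set a : ℝ := log (Fintype.card ι) + c * r ^ 2 / 2 with ha
  have hcard : (0 : ℝ) < Fintype.card ι := by exact_mod_cast Fintype.card_pos
  have hZint : Integrable (fun ω => ∑ i, exp (-a) * exp (r * Z i ω)) μ :=
    integrable_finsetSum _ fun i _ => ((hZ i).integrable_exp_mul r).const_mul _
  have hpoint : ∀ ω, r * (⨆ i, Z i ω) ≤ (∑ i, exp (-a) * exp (r * Z i ω)) + (a - 1) := by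
    intro ω
    obtain ⟨i, hi⟩ := exists_eq_ciSup_of_finite (f := fun i => Z i ω)
    have h1 := Finset.single_le_sum (f := fun i => exp (-a) * exp (r * Z i ω))
      (fun j _ => by positivity) (Finset.mem_univ i)
    have h2 := add_one_le_exp (-a + r * Z i ω)
    rw [exp_add] at h2
    rw [← hi]
    linarith
  have hsum : ∫ ω, ∑ i, exp (-a) * exp (r * Z i ω) ∂μ ≤ 1 := by
    rw [integral_finsetSum _ fun i _ => ((hZ i).integrable_exp_mul r).const_mul _]
    calc ∑ i, ∫ ω, exp (-a) * exp (r * Z i ω) ∂μ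
        ≤ ∑ _i : ι, exp (-a) * exp (c * r ^ 2 / 2) := by
          refine Finset.sum_le_sum fun i _ => ?_
          rw [integral_const_mul]
          exact mul_le_mul_of_nonneg_left ((hZ i).mgf_le r) (exp_pos _).le
      _ = 1 := by
          rw [Finset.sum_const, Finset.card_univ, nsmul_eq_mul, ← exp_add, ha,
            show -(log (Fintype.card ι : ℝ) + c * r ^ 2 / 2) + c * r ^ 2 / 2
              = -log (Fintype.card ι : ℝ) by ring, exp_neg, exp_log hcard, mul_inv_cancel₀ hcard.ne']
  have hmono := integral_mono
    ((integrable_iSup_of_fintype fun i => (hZ i).integrable).const_mul r)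
    (hZint.add (integrable_const (a - 1))) hpoint
  simp only [Pi.add_apply] at hmono
  rw [integral_const_mul, integral_add hZint (integrable_const _), integral_const] at hmono
  simp only [probReal_univ, one_smul] at hmono
  rw [le_div_iff₀ hr]
  linarith

/-- A centered Gaussian variable whose `L²`-norm is at most `C` is sub-Gaussian with variance
proxy `C ^ 2`. -/
lemma hasSubgaussianMGF_of_l2norm_le {Ω : Type} [MeasurableSpace Ω] {μ : Measure Ω} {Y : Ω → ℝ}
    (hY : AEMeasurable Y μ) {v C : NNReal} (hv : μ.map Y = gaussianReal 0 v)
    (hC : l2norm μ Y ≤ C) : HasSubgaussianMGF Y (C ^ 2) μ := by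
  have hsq : ∫ ω, Y ω ^ 2 ∂μ = v := by
    have h1 := variance_fun_id_gaussianReal (μ := 0) (v := v)
    rw [variance_eq_integral (by fun_prop), integral_id_gaussianReal, ← hv,
      integral_map hY (by fun_prop)] at h1
    simpa using h1
  have hvC : (v : ℝ) ≤ (C : ℝ) ^ 2 := by
    rw [l2norm, hsq] at hC
    exact (Real.sqrt_le_left C.2).1 hC
  refine ⟨fun t => ?_, fun t => ?_⟩
  · have h := integrable_exp_mul_gaussianReal (μ := 0) (v := v) t
    rw [← hv] at h
    exact h.comp_aemeasurable hY
  · rw [mgf_gaussianReal hv]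
    push_cast
    rw [zero_mul, zero_add]
    gcongr

/-- For a centered Gaussian process whose increments have `L²`-norm at most `C`, the expected
maximum over the grid of mesh `1 / n` is `O(√(log (n + 1)))`. -/
lemma expMaxGrid_bounds {Ω : Type} [MeasurableSpace Ω] {μ : Measure Ω} [IsProbabilityMeasure μ]
    {X : ℝ → Ω → ℝ} (hX : IsCenteredGaussianOn μ X (Icc 0 1)) {C : NNReal}
    (hC : ∀ t ∈ Icc (0 : ℝ) 1, l2norm μ (fun ω => X t ω - X 0 ω) ≤ C) {n : ℕ} (hn : 1 ≤ n) :
    0 ≤ expMaxGrid μ X n ∧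
      expMaxGrid μ X n ≤ (1 + (C : ℝ) ^ 2 / 2) * √(log (n + 1)) := by
  have h0 : (0 : ℝ) ∈ Icc (0 : ℝ) 1 := by simp
  have hgrid : ∀ i : Fin (n + 1), ((i : ℕ) : ℝ) / n ∈ Icc (0 : ℝ) 1 := fun i =>
    ⟨by positivity, div_le_one_of_le₀ (by exact_mod_cast Nat.lt_succ_iff.1 i.2) (by positivity)⟩
  have hlaw : ∀ t ∈ Icc (0 : ℝ) 1, ∃ v : NNReal, μ.map (X t) = gaussianReal 0 v := by
    intro t ht
    simpa using hX.2 1 (fun _ => 1) (fun _ => t) (fun _ => ht)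
  have hZint : ∀ t ∈ Icc (0 : ℝ) 1, Integrable (X t) μ ∧ ∫ ω, X t ω ∂μ = 0 := by
    intro t ht
    obtain ⟨v, hv⟩ := hlaw t ht
    have hm := (hX.1 t ht).aemeasurable (μ := μ)
    constructor
    · have h := (memLp_id_gaussianReal (μ := 0) (v := v) 1).integrable (by simp)
      rw [← hv] at h
      exact h.comp_aemeasurable hm
    · have h := integral_id_gaussianReal (μ := 0) (v := v)
      rwa [← hv, integral_map hm (by fun_prop)] at h
  have hsub : ∀ i : Fin (n + 1),
      HasSubgaussianMGF (fun ω => X ((i : ℕ) / n) ω - X 0 ω) (C ^ 2) μ := by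
    intro i
    obtain ⟨v, hv⟩ := hX.2 2 ![1, -1] ![(i : ℕ) / n, 0] (by
      intro j
      fin_cases j
      · exact hgrid i
      · exact h0)
    refine hasSubgaussianMGF_of_l2norm_le
      ((hX.1 _ (hgrid i)).sub (hX.1 _ h0)).aemeasurable (v := v) ?_ (hC _ (hgrid i))
    simp [Fin.sum_univ_two, ← sub_eq_add_neg] at hv
    exact hv
  have hsplit : expMaxGrid μ X n
      = ∫ ω, (⨆ i : Fin (n + 1), (X ((i : ℕ) / n) ω - X 0 ω)) ∂μ := by
    have h : ∀ ω, (⨆ i : Fin (n + 1), X ((i : ℕ) / n) ω)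
        = (⨆ i : Fin (n + 1), (X ((i : ℕ) / n) ω - X 0 ω)) + X 0 ω := by
      intro ω
      rw [ciSup_add (finite_range _).bddAbove]
      simp
    rw [expMaxGrid]
    simp_rw [h]
    rw [integral_add (integrable_iSup_of_fintype fun i => (hsub i).integrable) (hZint 0 h0).1,
      (hZint 0 h0).2, add_zero]
  rw [hsplit]
  constructor
  · refine integral_nonneg fun ω => ?_
    refine le_ciSup_of_le (finite_range _).bddAbove 0 ?_
    simp
  · have hlog : 0 < log ((n : ℝ) + 1) :=
      log_pos (by have : (1 : ℝ) ≤ n := by exact_mod_cast hn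
                  linarith)
    have hs := Real.sqrt_pos.2 hlog
    refine (integral_iSup_le_of_hasSubgaussianMGF hsub hs).trans_eq ?_
    rw [Fintype.card_fin, div_eq_iff hs.ne']
    push_cast
    rw [mul_assoc, Real.mul_self_sqrt hlog.le, Real.sq_sqrt hlog.le]
    ring

/-- if `H_m → 0` and `H_m ln n_m → 0`, then
`E[max_{0≤i≤n_m} X^{H_m}_{i/n_m}] = o(H_m^{-1/2})`. -/
theorem stmt19 {Ω : Type} [MeasurableSpace Ω] (μ : Measure Ω) [IsProbabilityMeasure μ]
    (X : ℝ → ℝ → Ω → ℝ) (C₂ : ℝ) (hC₂ : 0 < C₂)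
    (hgauss : ∀ H ∈ Ioo (0:ℝ) 1, IsCenteredGaussianOn μ (X H) (Icc 0 1))
    (hupp : ∀ H ∈ Ioo (0:ℝ) 1, ∀ s ∈ Icc (0:ℝ) 1, ∀ t ∈ Icc (0:ℝ) 1,
      l2norm μ (fun ω => X H t ω - X H s ω) ≤ C₂ * |t - s| ^ H)
    (H : ℕ → ℝ) (hH : ∀ m, H m ∈ Ioo (0:ℝ) 1) (hHlim : Tendsto H atTop (𝓝 0))
    (n : ℕ → ℕ) (hn : ∀ m, 2 ≤ n m)
    (hHn : Tendsto (fun m => H m * Real.log (n m)) atTop (𝓝 0)) :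
    Tendsto (fun m => Real.sqrt (H m) * expMaxGrid μ (X (H m)) (n m)) atTop (𝓝 0) := by
  lift C₂ to NNReal using hC₂.le
  have hbound : ∀ m, 0 ≤ expMaxGrid μ (X (H m)) (n m) ∧
      expMaxGrid μ (X (H m)) (n m) ≤ (1 + (C₂ : ℝ) ^ 2 / 2) * √(log (n m + 1)) := by
    intro m
    refine expMaxGrid_bounds (hgauss _ (hH m)) (fun t ht => ?_) (one_le_two.trans (hn m))
    refine (hupp _ (hH m) 0 (by simp) t ht).trans (mul_le_of_le_one_right C₂.2 ?_)
    rw [sub_zero, abs_of_nonneg ht.1]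
    exact rpow_le_one ht.1 ht.2 (hH m).1.le
  have hlim : Tendsto (fun m => (1 + (C₂ : ℝ) ^ 2 / 2) * √(2 * (H m * log (n m)))) atTop (𝓝 0) := by
    simpa using ((hHn.const_mul 2).sqrt).const_mul (1 + (C₂ : ℝ) ^ 2 / 2)
  refine squeeze_zero (fun m => mul_nonneg (Real.sqrt_nonneg _) (hbound m).1) (fun m => ?_) hlim
  have hn2 : (2 : ℝ) ≤ n m := by exact_mod_cast hn m
  have hlog : log ((n m : ℝ) + 1) ≤ 2 * log (n m) := by
    rw [← log_rpow (by linarith)]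
    refine log_le_log (by linarith) ?_
    norm_num
    nlinarith
  calc √(H m) * expMaxGrid μ (X (H m)) (n m)
      ≤ √(H m) * ((1 + (C₂ : ℝ) ^ 2 / 2) * √(log (n m + 1))) :=
        mul_le_mul_of_nonneg_left (hbound m).2 (Real.sqrt_nonneg _)
    _ = (1 + (C₂ : ℝ) ^ 2 / 2) * √(H m * log (n m + 1)) := by
        rw [Real.sqrt_mul (hH m).1.le]
        ring
    _ ≤ (1 + (C₂ : ℝ) ^ 2 / 2) * √(2 * (H m * log (n m))) := by
        refine mul_le_mul_of_nonneg_left (Real.sqrt_le_sqrt ?_) (by positivity)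
        nlinarith [(hH m).1]
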